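/- arXiv:1311.1972 — 2 statements merged into one kernel-verified Lean document; each statement's English description precedes it below -/
import Mathlib

section
/- The diameter of the unit dyadic cube C₀ = [0,1)³ with respect to the gauge distance equals 13^(1/4); that is, sup{δ(x,y) : x, y ∈ C₀} = 13^(1/4). -/
noncomputable section

open MeasureTheory

/-- The underlying space of the Heisenberg group: `ℝ³`. -/
abbrev H3 : Type := ℝ × ℝ × ℝ

/-- The Heisenberg group law `(p,q,r)∗(p',q',r') = (p+p', q+q', r+r'+2(qp'−pq'))`. -/
def Hmul (x y : H3) : H3 :=
  (x.1 + y.1, x.2.1 + y.2.1, x.2.2 + y.2.2 + 2 * (x.2.1 * y.1 - x.1 * y.2.1))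

/-- The inverse for the Heisenberg group law. -/
def Hinv (x : H3) : H3 := (-x.1, -x.2.1, -x.2.2)

/-- The homogeneous (gauge) norm `‖(p,q,r)‖ = ((p²+q²)²+r²)^(1/4)`. -/
def Hnorm (x : H3) : ℝ := ((x.1 ^ 2 + x.2.1 ^ 2) ^ 2 + x.2.2 ^ 2) ^ ((1 : ℝ) / 4)

/-- The gauge distance `δ(x,y) = ‖x⁻¹∗y‖`. -/
def Hdist (x y : H3) : ℝ := Hnorm (Hmul (Hinv x) y)

/-- The gauge ball `B(x,r)`. -/
def Hball (x : H3) (r : ℝ) : Set H3 := {y | Hdist x y < r}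

/-- The dilation `λ∘(p,q,r) = (λp, λq, λ²r)`. -/
def Hdil (l : ℝ) (x : H3) : H3 := (l * x.1, l * x.2.1, l ^ 2 * x.2.2)

/-- A lattice point of `ℤ³` seen inside `ℝ³`. -/
def latticePt (k : ℤ × ℤ × ℤ) : H3 := ((k.1 : ℝ), (k.2.1 : ℝ), (k.2.2 : ℝ))

/-- The dyadic point `x_{j,k} = 2^{−j}∘k`. -/
def xjk (j : ℤ) (k : ℤ × ℤ × ℤ) : H3 := Hdil ((2 : ℝ) ^ (-j)) (latticePt k)

/-- The unit cube `C₀ = [0,1)³`. -/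
def C0 : Set H3 :=
  {x : H3 | (0 ≤ x.1 ∧ x.1 < 1) ∧ (0 ≤ x.2.1 ∧ x.2.1 < 1) ∧ (0 ≤ x.2.2 ∧ x.2.2 < 1)}

/-- The diameter of the unit cube `C₀ = [0,1)³` for the gauge distance is
`13^(1/4)`. -/
theorem heisenberg_diam_unit_cube :
    sSup {d : ℝ | ∃ x ∈ C0, ∃ y ∈ C0, d = Hdist x y} = (13 : ℝ) ^ ((1 : ℝ) / 4) := by
  apply IsLUB.csSup_eq
  · constructor
    · rintro d ⟨⟨p, q, r⟩, ⟨⟨hp0, hp1⟩, ⟨hq0, hq1⟩, hr0, hr1⟩, ⟨p', q', r'⟩,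
        ⟨⟨hp0', hp1'⟩, ⟨hq0', hq1'⟩, hr0', hr1'⟩, rfl⟩
      simp only [Hdist, Hnorm, Hmul, Hinv] at *
      apply Real.rpow_le_rpow (by positivity) _ (by norm_num)
      have hA : (-p + p') ^ 2 ≤ 1 := by
        rw [sq_le_one_iff_abs_le_one, abs_le]; constructor <;> linarith
      have hB : (-q + q') ^ 2 ≤ 1 := by
        rw [sq_le_one_iff_abs_le_one, abs_le]; constructor <;> linarith
      have h1 : p * q' ≤ 1 := by nlinarith
      have h2 : q * p' ≤ 1 := by nlinarith
      have h3 : 0 ≤ p * q' := by positivity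
      have h4 : 0 ≤ q * p' := by positivity
      have hC : (-r + r' + 2 * (-q * p' - -p * q')) ^ 2 ≤ 3 ^ 2 := by
        apply sq_le_sq'
        · linarith
        · linarith
      have hAB : ((-p + p') ^ 2 + (-q + q') ^ 2) ^ 2 ≤ 2 ^ 2 := by
        apply pow_le_pow_left₀ (by positivity)
        linarith
      linarith
    · intro b hb
      have hcont : Continuous (fun t : ℝ =>
          (((-t) ^ 2 + t ^ 2) ^ 2 + (t + 2 * t ^ 2) ^ 2) ^ ((1 : ℝ) / 4)) := by
        apply Continuous.rpow_const (by fun_prop)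
        intro x; right; norm_num
      have ht := (hcont.tendsto 1).mono_left (nhdsWithin_le_nhds (s := Set.Iio (1 : ℝ)))
      have he : (((-(1 : ℝ)) ^ 2 + 1 ^ 2) ^ 2 + (1 + 2 * 1 ^ 2) ^ 2) = (13 : ℝ) := by norm_num
      simp only [he] at ht
      apply le_of_tendsto ht
      filter_upwards [Ioo_mem_nhdsLT (show (0 : ℝ) < 1 by norm_num)] with t ht
      apply hb
      refine ⟨(t, 0, 0), ?_, (0, t, t), ?_, ?_⟩
      · simp [C0, ht.1.le, ht.2]
      · simp [C0, ht.1.le, ht.2]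
      · simp only [Hdist, Hnorm, Hmul, Hinv]
        congr 1
        ring
  · exact ⟨_, (0, 0, 0), by simp [C0], (0, 0, 0), by simp [C0], rfl⟩
end
end

section
/- For every k ∈ ℕ there exist constants C_k > 0 and γ₂ > 0 such that for every function f : ℝ³ → ℝ of class C^{k+1} and every x₀ ∈ ℝ³, there exists a polynomial P on ℝ³ of homogeneous degree deg_ℍ P ≤ k such that for all y ∈ ℝ³, |f(x₀∗y) − P(y)| ≤ C_k·‖y‖^{k+1}·sup{ |∇^α f(x₀∗z)| : α a word with weighted order |α| = k+1, z ∈ ℝ³ with ‖z‖ ≤ γ₂^{k+1}·‖y‖ }. -/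
noncomputable section

open MeasureTheory

/-- The left-invariant vector field `X = ∂/∂p + 2q ∂/∂r` acting on functions. -/
def XD (f : H3 → ℝ) (x : H3) : ℝ := fderiv ℝ f x (1, 0, 2 * x.2.1)

/-- The left-invariant vector field `Y = ∂/∂q − 2p ∂/∂r` acting on functions. -/
def YD (f : H3 → ℝ) (x : H3) : ℝ := fderiv ℝ f x (0, 1, -2 * x.1)

/-- The vector field `Z = ∂/∂r` acting on functions. -/
def ZD (f : H3 → ℝ) (x : H3) : ℝ := fderiv ℝ f x (0, 0, 1)

/-- The vector fields `V₁ = X`, `V₂ = Y`, `V₃ = Z` (indexed by `Fin 3`). -/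
def vecField (i : Fin 3) : (H3 → ℝ) → H3 → ℝ :=
  if i = 0 then XD else if i = 1 then YD else ZD

/-- The iterated derivative `∇^α f = V_{α₁}⋯V_{α_m} f` along a word `α`. -/
def wordDeriv : List (Fin 3) → (H3 → ℝ) → H3 → ℝ
  | [] => fun f => f
  | i :: t => fun f => vecField i (wordDeriv t f)

/-- The weighted order `|α| = Σᵢ ω(αᵢ)` of a word, with `ω(1)=ω(2)=1`, `ω(3)=2`. -/
def wordWeight (α : List (Fin 3)) : ℕ :=
  (α.map fun i => if i = (2 : Fin 3) then 2 else 1).sum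

/-- The coordinates of a point of `ℝ³` as a function `Fin 3 → ℝ`. -/
def coords (x : H3) : Fin 3 → ℝ := ![x.1, x.2.1, x.2.2]

/-- Evaluation of a polynomial on `ℝ³` at a point. -/
def evalP (P : MvPolynomial (Fin 3) ℝ) (x : H3) : ℝ := MvPolynomial.eval (coords x) P

/-- The Heisenberg weights of the coordinates `(p,q,r)`: `ω(p)=ω(q)=1`, `ω(r)=2`. -/
def wH : Fin 3 → ℕ := ![1, 1, 2]

/-- The homogeneous degree `deg_ℍ` of a polynomial on the Heisenberg group:
the monomial `p^a q^b r^c` has weight `a+b+2c`. -/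
def hdeg (P : MvPolynomial (Fin 3) ℝ) : ℕ := MvPolynomial.weightedTotalDegree wH P

lemma Hnorm_nonneg (y : H3) : 0 ≤ Hnorm y := by
  unfold Hnorm; positivity

lemma Hnorm_pow (y : H3) : Hnorm y ^ 4 = (y.1 ^ 2 + y.2.1 ^ 2) ^ 2 + y.2.2 ^ 2 := by
  unfold Hnorm
  rw [← Real.rpow_natCast, ← Real.rpow_mul (by positivity)]
  norm_num

lemma Hnorm_c1 (y : H3) : |y.1| ≤ Hnorm y := by
  have h := Hnorm_pow y
  refine (pow_le_pow_iff_left₀ (abs_nonneg _) (Hnorm_nonneg y) (n := 4) (by norm_num)).1 ?_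
  have : |y.1| ^ 4 = (y.1 ^ 2) ^ 2 := by rw [← sq_abs y.1]; ring
  rw [h, this]
  nlinarith [sq_nonneg y.1, sq_nonneg y.2.1, sq_nonneg y.2.2, mul_nonneg (sq_nonneg y.1) (sq_nonneg y.2.1), sq_nonneg (y.2.1 ^ 2)]

lemma Hnorm_c2 (y : H3) : |y.2.1| ≤ Hnorm y := by
  have h := Hnorm_pow y
  refine (pow_le_pow_iff_left₀ (abs_nonneg _) (Hnorm_nonneg y) (n := 4) (by norm_num)).1 ?_
  have : |y.2.1| ^ 4 = (y.2.1 ^ 2) ^ 2 := by rw [← sq_abs y.2.1]; ring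
  rw [h, this]
  nlinarith [sq_nonneg y.1, sq_nonneg y.2.1, sq_nonneg y.2.2, mul_nonneg (sq_nonneg y.1) (sq_nonneg y.2.1), sq_nonneg (y.1 ^ 2)]

lemma Hnorm_c3 (y : H3) : |y.2.2| ≤ Hnorm y ^ 2 := by
  have h := Hnorm_pow y
  refine abs_le_of_sq_le_sq (b := Hnorm y ^ 2) ?_ (by positivity)
  have : (Hnorm y ^ 2) ^ 2 = Hnorm y ^ 4 := by ring
  rw [this, h]
  nlinarith [sq_nonneg (y.1 ^ 2 + y.2.1 ^ 2)]

lemma Hnorm_box (z : H3) (N : ℝ) (h1 : |z.1| ≤ 2 * N) (h2 : |z.2.1| ≤ 2 * N)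
    (h3 : |z.2.2| ≤ 10 * N ^ 2) : Hnorm z ≤ 4 * N := by
  have hN : 0 ≤ N := by linarith [abs_nonneg z.1]
  refine (pow_le_pow_iff_left₀ (Hnorm_nonneg z) (by positivity) (n := 4) (by norm_num)).1 ?_
  rw [Hnorm_pow]
  have e1 : z.1 ^ 2 ≤ (2 * N) ^ 2 := sq_le_sq' (by linarith [abs_le.1 h1]) (abs_le.1 h1).2
  have e2 : z.2.1 ^ 2 ≤ (2 * N) ^ 2 := sq_le_sq' (by linarith [abs_le.1 h2]) (abs_le.1 h2).2
  have e3 : z.2.2 ^ 2 ≤ (10 * N ^ 2) ^ 2 := sq_le_sq' (by linarith [abs_le.1 h3]) (abs_le.1 h3).2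
  have e4 : (z.1 ^ 2 + z.2.1 ^ 2) ^ 2 ≤ (8 * N ^ 2) ^ 2 := by
    apply pow_le_pow_left₀ (by positivity); linarith
  nlinarith [pow_nonneg hN 4]

lemma mv_unit (φ φ' : ℝ → ℝ) (M : ℝ) (h : ∀ t ∈ Set.Icc (0 : ℝ) 1, HasDerivAt φ (φ' t) t)
    (hb : ∀ t ∈ Set.Icc (0 : ℝ) 1, |φ' t| ≤ M) : ∀ t ∈ Set.Icc (0 : ℝ) 1, |φ t - φ 0| ≤ M := by
  intro t ht
  have := (convex_Icc (0 : ℝ) 1).norm_image_sub_le_of_norm_hasDerivWithin_le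
    (fun x hx => (h x hx).hasDerivWithinAt) (fun x hx => by simpa using hb x hx)
    (show (0 : ℝ) ∈ Set.Icc (0 : ℝ) 1 by simp) ht
  have hM : 0 ≤ M := (abs_nonneg _).trans (hb t ht)
  simp only [Real.norm_eq_abs, sub_zero] at this
  rw [abs_of_nonneg ht.1] at this
  nlinarith [ht.2]

lemma taylor_unit (n : ℕ) : ∀ (φ : ℕ → ℝ → ℝ) (c M : ℝ),
    (∀ i < n, ∀ t, HasDerivAt (φ i) (φ (i + 1) t) t) →
    (∀ t ∈ Set.Icc (0 : ℝ) 1, |φ n t - c| ≤ M) →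
    ∀ t ∈ Set.Icc (0 : ℝ) 1,
      |φ 0 t - (∑ i ∈ Finset.range n, φ i 0 * (t ^ i / (i.factorial : ℝ)))
        - c * (t ^ n / (n.factorial : ℝ))| ≤ M := by
  induction n with
  | zero => intro φ c M _ hb t ht; simpa using hb t ht
  | succ n ih =>
    intro φ c M hd hb t ht
    have key := ih (fun i => φ (i + 1)) c M (fun i hi => hd (i + 1) (by omega)) hb
    have hpow : ∀ (i : ℕ) (s : ℝ), HasDerivAt (fun s : ℝ => s ^ (i + 1) / ((i + 1).factorial : ℝ))
        (s ^ i / (i.factorial : ℝ)) s := by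
      intro i s
      have := (hasDerivAt_pow (i + 1) s).div_const ((i + 1).factorial : ℝ)
      refine this.congr_deriv ?_
      rw [Nat.factorial_succ]
      push_cast
      have : (i.factorial : ℝ) ≠ 0 := by positivity
      have : (i : ℝ) + 1 ≠ 0 := by positivity
      field_simp
      try simp
    have := mv_unit (fun s => φ 0 s - (∑ i ∈ Finset.range n, φ (i + 1) 0 * (s ^ (i + 1) / ((i + 1).factorial : ℝ)))
        - c * (s ^ (n + 1) / ((n + 1).factorial : ℝ))) _ M (fun s hs => by
          refine ((hd 0 (by omega) s).sub (HasDerivAt.fun_sum fun i _ => (hpow i s).const_mul _)).sub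
            ((hpow n s).const_mul c)) key t ht
    refine le_of_eq_of_le ?_ this
    congr 1
    rw [Finset.sum_range_succ']
    simp
    ring

lemma hasDerivAt_line (h : H3 → ℝ) (hh : Differentiable ℝ h) (x v : H3) (s : ℝ) :
    HasDerivAt (fun s : ℝ => h (x + s • v)) (fderiv ℝ h (x + s • v) v) s := by
  have h1 : HasDerivAt (fun s : ℝ => x + s • v) v s := by
    simpa using ((hasDerivAt_id s).smul_const v).const_add x
  exact (hh (x + s • v)).hasFDerivAt.comp_hasDerivAt s h1

lemma fderiv_smul' (h : H3 → ℝ) (x v w : H3) (a : ℝ) (e : w = a • v) :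
    fderiv ℝ h x w = a * fderiv ℝ h x v := by
  rw [e, map_smul, smul_eq_mul]

lemma segX (h : H3 → ℝ) (hh : Differentiable ℝ h) (p q r a M : ℝ)
    (hb : ∀ s ∈ Set.Icc (0 : ℝ) 1, |XD h (p + s * a, q, r + s * (2 * q * a))| ≤ M) :
    |h (p + a, q, r + 2 * q * a) - h (p, q, r)| ≤ |a| * M := by
  have := mv_unit _ _ (|a| * M) (fun s _ => hasDerivAt_line h hh (p, q, r) (a, 0, 2 * q * a) s)
    (fun s hs => by
      rw [fderiv_smul' h _ (1, 0, 2 * q) _ a (by simp; ring), abs_mul]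
      have := hb s hs
      simp only [XD] at this
      simpa using mul_le_mul_of_nonneg_left this (abs_nonneg a)) 1 (by simp)
  simpa using this

lemma segY (h : H3 → ℝ) (hh : Differentiable ℝ h) (p q r b M : ℝ)
    (hb : ∀ s ∈ Set.Icc (0 : ℝ) 1, |YD h (p, q + s * b, r + s * (-2 * p * b))| ≤ M) :
    |h (p, q + b, r + -2 * p * b) - h (p, q, r)| ≤ |b| * M := by
  have := mv_unit _ _ (|b| * M) (fun s _ => hasDerivAt_line h hh (p, q, r) (0, b, -2 * p * b) s)
    (fun s hs => by
      rw [fderiv_smul' h _ (0, 1, -2 * p) _ b (by simp; ring), abs_mul]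
      have := hb s hs
      simp only [YD] at this
      simpa using mul_le_mul_of_nonneg_left this (abs_nonneg b)) 1 (by simp)
  simpa using this

lemma seg_bound {N p q r a c s : ℝ} (hq : |q| ≤ 3 / 2 * N)
    (hr : |r| ≤ c * N ^ 2) (ha : |a| ≤ N / 2) (hs : s ∈ Set.Icc (0 : ℝ) 1) (hp : |p| ≤ 3 / 2 * N) :
    |p + s * a| ≤ 2 * N ∧ |q| ≤ 2 * N ∧ |r + s * (2 * q * a)| ≤ (c + 3 / 2) * N ^ 2 ∧
    |r + s * (-2 * q * a)| ≤ (c + 3 / 2) * N ^ 2 := by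
  have hN : 0 ≤ N := by linarith [abs_nonneg a]
  have hs1 : |s| ≤ 1 := abs_le.2 ⟨by linarith [hs.1], hs.2⟩
  have h1 : |s * a| ≤ N / 2 := by
    rw [abs_mul]; nlinarith [abs_nonneg a, abs_nonneg s]
  have h2 : |q * (s * a)| ≤ 3 / 2 * N * (N / 2) := by
    rw [abs_mul]; exact mul_le_mul hq h1 (abs_nonneg _) (by positivity)
  rw [abs_le] at *
  refine ⟨⟨by linarith, by linarith⟩, ?_, ?_, ?_⟩ <;> rw [abs_le] <;> constructor <;>
    linarith

lemma comm_path (h : H3 → ℝ) (hh : Differentiable ℝ h) (p q r N M : ℝ)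
    (hp : |p| ≤ N) (hq : |q| ≤ N) (hr : |r| ≤ N ^ 2)
    (hX : ∀ z : H3, Hnorm z ≤ 4 * N → |XD h z| ≤ M)
    (hY : ∀ z : H3, Hnorm z ≤ 4 * N → |YD h z| ≤ M) :
    |h (p, q, r) - h (p, q, 0)| ≤ 2 * N * M := by
  have hN : 0 ≤ N := (abs_nonneg _).trans hp
  have hM : 0 ≤ M := (abs_nonneg _).trans (hX 0 (by
    have := Hnorm_box 0 N (by simpa) (by simpa) (by simp; positivity)
    exact this))
  obtain ⟨a, b, ha, hb, hab⟩ : ∃ a b : ℝ, |a| ≤ N / 2 ∧ |b| ≤ N / 2 ∧ r = -4 * (a * b) := by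
    have hs : Real.sqrt |r| ≤ N := Real.sqrt_le_iff.2 ⟨hN, hr⟩
    have hs0 := Real.sqrt_nonneg |r|
    have hss := Real.mul_self_sqrt (abs_nonneg r)
    rcases le_total 0 r with h0 | h0
    · refine ⟨Real.sqrt |r| / 2, -(Real.sqrt |r| / 2), ?_, ?_, ?_⟩
      · rw [abs_of_nonneg (by positivity)]; linarith
      · rw [abs_neg, abs_of_nonneg (by positivity)]; linarith
      · rw [abs_of_nonneg h0] at *; linarith
    · refine ⟨Real.sqrt |r| / 2, (Real.sqrt |r| / 2), ?_, ?_, ?_⟩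
      · rw [abs_of_nonneg (by positivity)]; linarith
      · rw [abs_of_nonneg (by positivity)]; linarith
      · rw [abs_of_nonpos h0] at *; linarith
  have hN2 : 0 ≤ N ^ 2 := by positivity
  have one : (1 : ℝ) ∈ Set.Icc (0 : ℝ) 1 := by simp
  have hpa : |p + a| ≤ 3 / 2 * N := (abs_add_le _ _).trans (by linarith)
  have hqb : |q + b| ≤ 3 / 2 * N := (abs_add_le _ _).trans (by linarith)
  have hp' : |p| ≤ 3 / 2 * N := by linarith
  have hq' : |q| ≤ 3 / 2 * N := by linarith
  have hna : |-a| ≤ N / 2 := by rwa [abs_neg]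
  have hnb : |-b| ≤ N / 2 := by rwa [abs_neg]
  have h0 : |(0 : ℝ)| ≤ 0 * N ^ 2 := by simp
  -- third coordinates
  have b1 : |0 + 2 * q * a| ≤ (0 + 3 / 2) * N ^ 2 := by
    simpa using (seg_bound hq' h0 ha one hp').2.2.1
  have b2 : |0 + 2 * q * a + -2 * (p + a) * b| ≤ (0 + 3 / 2 + 3 / 2) * N ^ 2 := by
    simpa using (seg_bound hpa b1 hb one hq').2.2.2
  have b3 : |0 + 2 * q * a + -2 * (p + a) * b + 2 * (q + b) * (-a)| ≤
      (0 + 3 / 2 + 3 / 2 + 3 / 2) * N ^ 2 := by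
    simpa using (seg_bound hqb b2 hna one hpa).2.2.1
  have s1 := segX h hh p q 0 a M (fun s hs => hX _ (by
    obtain ⟨e1, e2, e3, -⟩ := seg_bound hq' h0 ha hs hp'
    exact Hnorm_box _ N e1 e2 (e3.trans (by linarith))))
  have s2 := segY h hh (p + a) q _ b M (fun s hs => hY _ (by
    obtain ⟨e1, e2, -, e3⟩ := seg_bound hpa b1 hb hs hq'
    exact Hnorm_box _ N e2 e1 (e3.trans (by linarith))))
  have s3 := segX h hh (p + a) (q + b) _ (-a) M (fun s hs => hX _ (by
    obtain ⟨e1, e2, e3, -⟩ := seg_bound hqb b2 hna hs hpa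
    exact Hnorm_box _ N e1 e2 (e3.trans (by linarith))))
  have s4 := segY h hh (p + a + -a) (q + b) _ (-b) M (fun s hs => hY _ (by
    obtain ⟨e1, e2, -, e3⟩ := seg_bound (p := q + b) (q := p + a + -a) (by simpa using hp') b3 hnb hs hqb
    exact Hnorm_box _ N e2 e1 (e3.trans (by linarith))))
  have efin : ((p + a + -a, q + b + -b,
      0 + 2 * q * a + -2 * (p + a) * b + 2 * (q + b) * (-a) + -2 * (p + a + -a) * (-b)) : H3)
      = (p, q, r) := by
    rw [hab]
    ext
    · simp
    · simp
    · simp; ring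
  rw [efin] at s4
  rw [abs_neg] at s3 s4
  have ta : |a| * M ≤ N / 2 * M := mul_le_mul_of_nonneg_right ha hM
  have tb : |b| * M ≤ N / 2 * M := mul_le_mul_of_nonneg_right hb hM
  rw [abs_le] at s1 s2 s3 s4 ⊢
  constructor <;> linarith

lemma vf_contDiff (n : ℕ) (F : H3 → ℝ) (hF : ContDiff ℝ ((n + 1 : ℕ) : WithTop ℕ∞) F) (i : Fin 3) :
    ContDiff ℝ n (vecField i F) := by
  have hd : ContDiff ℝ n (fderiv ℝ F) := hF.fderiv_right (by norm_cast)
  unfold vecField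
  split_ifs
  · unfold XD; exact hd.clm_apply (by fun_prop)
  · unfold YD; exact hd.clm_apply (by fun_prop)
  · unfold ZD; exact hd.clm_apply (by fun_prop)

lemma word_contDiff (α : List (Fin 3)) : ∀ (n : ℕ) (F : H3 → ℝ),
    ContDiff ℝ ((n + α.length : ℕ) : WithTop ℕ∞) F → ContDiff ℝ n (wordDeriv α F) := by
  induction α with
  | nil => intro n F h; simpa [wordDeriv] using h
  | cons i t ih =>
    intro n F h
    refine vf_contDiff n _ (ih (n + 1) F ?_) i
    have e : n + 1 + t.length = n + (i :: t).length := by simp; omega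
    rw [e]; exact h

lemma wordDeriv_append (a b : List (Fin 3)) (f : H3 → ℝ) :
    wordDeriv (a ++ b) f = wordDeriv a (wordDeriv b f) := by
  induction a with
  | nil => rfl
  | cons i t ih => simp [wordDeriv, ih]

lemma wordWeight_append (a b : List (Fin 3)) :
    wordWeight (a ++ b) = wordWeight a + wordWeight b := by
  simp [wordWeight]

lemma wordWeight_replicate (j : ℕ) : wordWeight (List.replicate j 2) = 2 * j := by
  simp [wordWeight]; ring

lemma length_le_weight (a : List (Fin 3)) : a.length ≤ wordWeight a := by
  induction a with
  | nil => simp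
  | cons i t ih =>
    simp only [wordWeight, List.map_cons, List.sum_cons, List.length_cons] at *
    split_ifs <;> omega

lemma Hmul_hasFDerivAt (x y : H3) : ∃ L : H3 →L[ℝ] H3, HasFDerivAt (Hmul x) L y ∧
    ∀ v, L v = (v.1, v.2.1, v.2.2 + 2 * (x.2.1 * v.1 - x.1 * v.2.1)) := by
  let L0 : H3 →ₗ[ℝ] H3 :=
    { toFun := fun v => (v.1, v.2.1, v.2.2 + 2 * (x.2.1 * v.1 - x.1 * v.2.1))
      map_add' := by intro a b; ext <;> simp; ring
      map_smul' := by intro a b; ext <;> simp; ring }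
  refine ⟨LinearMap.toContinuousLinearMap L0, ?_, fun v => rfl⟩
  have h := ((LinearMap.toContinuousLinearMap L0).hasFDerivAt (x := y)).const_add x
  refine h.congr_of_eventuallyEq (Filter.Eventually.of_forall fun v => ?_)
  simp only [Hmul, LinearMap.coe_toContinuousLinearMap', LinearMap.coe_mk, AddHom.coe_mk, L0]
  ext <;> simp; ring

lemma vf_comp (x : H3) (F : H3 → ℝ) (hF : Differentiable ℝ F) (i : Fin 3) :
    vecField i (fun y => F (Hmul x y)) = fun y => vecField i F (Hmul x y) := by
  funext y
  obtain ⟨L, hL, hv⟩ := Hmul_hasFDerivAt x y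
  have h : fderiv ℝ (fun y => F (Hmul x y)) y = (fderiv ℝ F (Hmul x y)).comp L :=
    ((hF (Hmul x y)).hasFDerivAt.comp y hL).fderiv
  unfold vecField
  split_ifs
  · simp only [XD, h, ContinuousLinearMap.comp_apply, hv]
    congr 1
    ext <;> simp [Hmul]; ring
  · simp only [YD, h, ContinuousLinearMap.comp_apply, hv]
    congr 1
    ext <;> simp [Hmul]; ring
  · simp only [ZD, h, ContinuousLinearMap.comp_apply, hv]
    congr 1
    ext <;> simp

lemma word_comp (x : H3) (α : List (Fin 3)) (F : H3 → ℝ)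
    (hF : ContDiff ℝ (α.length : WithTop ℕ∞) F) :
    wordDeriv α (fun y => F (Hmul x y)) = fun y => wordDeriv α F (Hmul x y) := by
  induction α with
  | nil => rfl
  | cons i t ih =>
    simp only [wordDeriv]
    rw [ih (hF.of_le (by simp)), vf_comp]
    have : ContDiff ℝ ((1 : ℕ) : WithTop ℕ∞) (wordDeriv t F) :=
      word_contDiff t 1 F (by convert hF using 2; simp; ring)
    exact this.differentiable (by simp)

/-- The operator `(pX+qY)^i`. -/
def Eop (p q : ℝ) : ℕ → (H3 → ℝ) → H3 → ℝ
  | 0, h, x => h x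
  | i + 1, h, x => p * Eop p q i (vecField 0 h) x + q * Eop p q i (vecField 1 h) x

/-- `(pX+qY)^i h (0)` as a polynomial. -/
def Dp : ℕ → (H3 → ℝ) → MvPolynomial (Fin 3) ℝ
  | 0, h => MvPolynomial.C (h 0)
  | i + 1, h => MvPolynomial.X 0 * Dp i (vecField 0 h) + MvPolynomial.X 1 * Dp i (vecField 1 h)

lemma evalP_Dp (y : H3) (i : ℕ) : ∀ h, evalP (Dp i h) y = Eop y.1 y.2.1 i h 0 := by
  induction i with
  | zero => intro h; simp [evalP, Dp, Eop]
  | succ i ih =>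
    intro h
    simp only [evalP, Dp, Eop] at ih ⊢
    rw [map_add, map_mul, map_mul, ih, ih]
    simp [coords]

lemma Dp_hom (i : ℕ) : ∀ h, (Dp i h).IsWeightedHomogeneous wH i := by
  induction i with
  | zero => intro h; exact MvPolynomial.isWeightedHomogeneous_C _ _
  | succ i ih =>
    intro h
    have h0 := (MvPolynomial.isWeightedHomogeneous_X ℝ wH 0).mul (ih (vecField 0 h))
    have h1 := (MvPolynomial.isWeightedHomogeneous_X ℝ wH 1).mul (ih (vecField 1 h))
    have e0 : wH 0 + i = i + 1 := by simp [wH]; ring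
    have e1 : wH 1 + i = i + 1 := by simp [wH]; ring
    rw [e0] at h0; rw [e1] at h1
    exact h0.add h1

lemma Eop_bound (p q M : ℝ) (x : H3) (i : ℕ) : ∀ h : H3 → ℝ,
    (∀ w, wordWeight w = i → |wordDeriv w h x| ≤ M) →
    |Eop p q i h x| ≤ (|p| + |q|) ^ i * M := by
  induction i with
  | zero => intro h hb; simpa [Eop, wordDeriv] using hb [] (by simp [wordWeight])
  | succ i ih =>
    intro h hb
    have h0 := ih (vecField 0 h) (fun w hw => by
      have := hb (w ++ [0]) (by rw [wordWeight_append, hw]; simp [wordWeight])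
      rwa [wordDeriv_append] at this)
    have h1 := ih (vecField 1 h) (fun w hw => by
      have := hb (w ++ [1]) (by rw [wordWeight_append, hw]; simp [wordWeight])
      rwa [wordDeriv_append] at this)
    simp only [Eop]
    calc _ ≤ |p| * |Eop p q i (vecField 0 h) x| + |q| * |Eop p q i (vecField 1 h) x| := by
          rw [← abs_mul, ← abs_mul]; exact abs_add_le _ _
      _ ≤ |p| * ((|p| + |q|) ^ i * M) + |q| * ((|p| + |q|) ^ i * M) := by gcongr
      _ = _ := by ring

lemma Eop_deriv (p q : ℝ) (i : ℕ) : ∀ h : H3 → ℝ, ContDiff ℝ ((i + 1 : ℕ) : WithTop ℕ∞) h →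
    ∀ s : ℝ, HasDerivAt (fun s : ℝ => Eop p q i h (s * p, s * q, 0))
      (Eop p q (i + 1) h (s * p, s * q, 0)) s := by
  induction i with
  | zero =>
    intro h hh s
    have := hasDerivAt_line h (hh.differentiable (by simp)) 0 (p, q, 0) s
    simp only [zero_add, Prod.smul_mk, smul_eq_mul, mul_zero] at this
    simp only [Eop, vecField, XD, YD]
    refine this.congr_deriv ?_
    simp only [if_true, one_ne_zero, if_false, XD, YD]
    rw [← smul_eq_mul p, ← smul_eq_mul q, ← map_smul, ← map_smul, ← map_add]
    congr 1
    ext <;> simp; ring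
  | succ i ih =>
    intro h hh s
    exact ((ih _ (vf_contDiff _ _ hh 0) s).const_mul p).add ((ih _ (vf_contDiff _ _ hh 1) s).const_mul q)

/-- Horizontal Taylor polynomial. -/
def Tp (n : ℕ) (h : H3 → ℝ) : MvPolynomial (Fin 3) ℝ :=
  ∑ i ∈ Finset.range n, MvPolynomial.C (1 / (i.factorial : ℝ)) * Dp i h

lemma horiz (n : ℕ) (h : H3 → ℝ) (hh : ContDiff ℝ n h) (y : H3) (N M : ℝ)
    (hp : |y.1| ≤ N) (hq : |y.2.1| ≤ N)
    (hb : ∀ w z, wordWeight w = n → Hnorm z ≤ 4 * N → |wordDeriv w h z| ≤ M) :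
    |h (y.1, y.2.1, 0) - evalP (Tp n h) y| ≤ (2 * N) ^ n * M := by
  have hN : 0 ≤ N := (abs_nonneg _).trans hp
  have := taylor_unit n (fun i s => Eop y.1 y.2.1 i h (s * y.1, s * y.2.1, 0)) 0 ((2 * N) ^ n * M)
    (fun i hi s => Eop_deriv _ _ i h (hh.of_le (by exact_mod_cast hi)) s)
    (fun s hs => by
      have hs1 : |s| ≤ 1 := abs_le.2 ⟨by linarith [hs.1], hs.2⟩
      have hz : Hnorm (s * y.1, s * y.2.1, 0) ≤ 4 * N := by
        apply Hnorm_box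
        · rw [abs_mul]; nlinarith [abs_nonneg y.1, abs_nonneg s]
        · rw [abs_mul]; nlinarith [abs_nonneg y.2.1, abs_nonneg s]
        · simp; positivity
      have hM : 0 ≤ M := (abs_nonneg _).trans
        (hb (List.replicate n 0) _ (by simp [wordWeight]) hz)
      have h1 := Eop_bound y.1 y.2.1 M _ n h (fun w hw => hb w _ hw hz)
      rw [sub_zero]
      refine h1.trans ?_
      gcongr
      linarith) 1 (by simp)
  simp only [one_mul, zero_mul, one_pow, sub_zero] at this
  refine le_of_eq_of_le ?_ this
  congr 2
  simp only [Tp, evalP, map_sum, map_mul, MvPolynomial.eval_C]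
  refine Finset.sum_congr rfl fun i _ => ?_
  have := evalP_Dp y i h
  simp only [evalP] at this
  rw [this, mul_comm]; rfl

lemma replicate_deriv (j : ℕ) (g : H3 → ℝ) :
    wordDeriv (List.replicate (j + 1) 2) g = ZD (wordDeriv (List.replicate j 2) g) := by
  simp [List.replicate_succ, wordDeriv, vecField]

lemma vert (k : ℕ) (g : H3 → ℝ) (hg : ContDiff ℝ ((k + 1 : ℕ) : WithTop ℕ∞) g) (y : H3) (N M : ℝ)
    (hp : |y.1| ≤ N) (hq : |y.2.1| ≤ N) (hr : |y.2.2| ≤ N ^ 2)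
    (hb : ∀ w z, wordWeight w = k + 1 → Hnorm z ≤ 4 * N → |wordDeriv w g z| ≤ M) :
    |g y - ∑ j ∈ Finset.range (k / 2 + 1), wordDeriv (List.replicate j 2) g (y.1, y.2.1, 0) *
      (y.2.2 ^ j / (j.factorial : ℝ))| ≤ 2 * N ^ (k + 1) * M := by
  obtain ⟨p, q, r⟩ := y
  simp only at *
  have hN : 0 ≤ N := (abs_nonneg _).trans hp
  have hdiff : ∀ j ≤ k, Differentiable ℝ (wordDeriv (List.replicate j 2) g) := by
    intro j hj
    have : ContDiff ℝ ((1 : ℕ) : WithTop ℕ∞) (wordDeriv (List.replicate j 2) g) :=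
      word_contDiff _ 1 g (hg.of_le (by simp only [List.length_replicate]; norm_cast; omega))
    exact this.differentiable (by simp)
  have hd : ∀ j ≤ k, ∀ s : ℝ, HasDerivAt
      (fun s : ℝ => r ^ j * wordDeriv (List.replicate j 2) g (p, q, s * r))
      (r ^ (j + 1) * wordDeriv (List.replicate (j + 1) 2) g (p, q, s * r)) s := by
    intro j hj s
    have := (hasDerivAt_line _ (hdiff j hj) (p, q, 0) (0, 0, r) s).const_mul (r ^ j)
    rw [fderiv_smul' _ _ (0, 0, 1) _ r (by simp)] at this
    simp only [Prod.smul_mk, smul_eq_mul, mul_zero, Prod.mk_add_mk, add_zero, zero_add] at this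
    refine this.congr_deriv ?_
    rw [replicate_deriv, ZD]; ring
  have hbox : ∀ s ∈ Set.Icc (0 : ℝ) 1, |s * r| ≤ N ^ 2 := by
    intro s hs
    have hs1 : |s| ≤ 1 := abs_le.2 ⟨by linarith [hs.1], hs.2⟩
    rw [abs_mul]; nlinarith [abs_nonneg r, abs_nonneg s]
  have hbox' : ∀ s ∈ Set.Icc (0 : ℝ) 1, Hnorm (p, q, s * r) ≤ 4 * N := by
    intro s hs
    exact Hnorm_box _ N (by simp only; linarith) (by simp only; linarith)
      ((hbox s hs).trans (by nlinarith [sq_nonneg N]))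
  have hM : 0 ≤ M := (abs_nonneg _).trans
    (hb (List.replicate (k + 1) 0) _ (by simp [wordWeight]) (hbox' 0 (by simp)))
  have hrp : ∀ m, |r ^ m| ≤ N ^ (2 * m) := by
    intro m; rw [abs_pow, pow_mul]; gcongr
  rcases Nat.even_or_odd' k with ⟨m, rfl | rfl⟩
  · have e : 2 * m / 2 = m := by omega
    rw [e]
    have := taylor_unit m (fun j s => r ^ j * wordDeriv (List.replicate j 2) g (p, q, s * r))
      (r ^ m * wordDeriv (List.replicate m 2) g (p, q, 0)) (2 * N ^ (2 * m + 1) * M)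
      (fun j hj s => hd j (by omega) s)
      (fun s hs => by
        rw [← mul_sub, abs_mul]
        have := comm_path _ (hdiff m (by omega)) p q (s * r) N M hp hq (hbox s hs)
          (fun z hz => hb (0 :: List.replicate m 2) z
            (by rw [← List.singleton_append, wordWeight_append, wordWeight_replicate]
                simp [wordWeight]; ring) hz)
          (fun z hz => hb (1 :: List.replicate m 2) z
            (by rw [← List.singleton_append, wordWeight_append, wordWeight_replicate]
                simp [wordWeight]; ring) hz)
        calc _ ≤ N ^ (2 * m) * (2 * N * M) :=
              mul_le_mul (hrp m) this (abs_nonneg _) (by positivity)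
          _ = _ := by ring) 1 (by simp)
    refine le_of_eq_of_le ?_ this
    congr 1
    rw [Finset.sum_range_succ]
    simp only [one_pow, one_mul, zero_mul, pow_zero, List.replicate_zero, wordDeriv]
    have : ∀ j : ℕ, r ^ j * wordDeriv (List.replicate j 2) g (p, q, 0) * (1 / (j.factorial : ℝ))
       = wordDeriv (List.replicate j 2) g (p, q, 0) * (r ^ j / (j.factorial : ℝ)) := by
      intro j; ring
    simp only [this]
    ring
  · have e : (2 * m + 1) / 2 + 1 = m + 1 := by omega
    rw [e]
    have := taylor_unit (m + 1) (fun j s => r ^ j * wordDeriv (List.replicate j 2) g (p, q, s * r))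
      0 (2 * N ^ (2 * m + 1 + 1) * M)
      (fun j hj s => hd j (by omega) s)
      (fun s hs => by
        rw [sub_zero, abs_mul]
        have := hb (List.replicate (m + 1) 2) _ (by rw [wordWeight_replicate]; ring) (hbox' s hs)
        calc _ ≤ N ^ (2 * (m + 1)) * M :=
              mul_le_mul (hrp _) this (abs_nonneg _) (by positivity)
          _ = 1 * N ^ (2 * m + 1 + 1) * M := by ring
          _ ≤ _ := by gcongr; norm_num) 1 (by simp)
    refine le_of_eq_of_le ?_ this
    congr 1
    simp only [one_pow, one_mul, zero_mul, pow_zero, List.replicate_zero, wordDeriv, sub_zero]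
    congr 1
    refine Finset.sum_congr rfl fun j _ => ?_
    ring

/-- The Taylor polynomial. -/
def TP (k : ℕ) (g : H3 → ℝ) : MvPolynomial (Fin 3) ℝ :=
  ∑ j ∈ Finset.range (k / 2 + 1), (MvPolynomial.C (1 / (j.factorial : ℝ)) * MvPolynomial.X 2 ^ j) *
    Tp (k + 1 - 2 * j) (wordDeriv (List.replicate j 2) g)

lemma TP_hdeg (k : ℕ) (g : H3 → ℝ) : hdeg (TP k g) ≤ k := by
  unfold hdeg MvPolynomial.weightedTotalDegree
  refine Finset.sup_le fun d hd => ?_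
  simp only [TP, Tp, Finset.mul_sum] at hd
  rw [MvPolynomial.mem_support_iff, MvPolynomial.coeff_sum] at hd
  obtain ⟨j, hj, hd⟩ := Finset.exists_ne_zero_of_sum_ne_zero hd
  rw [MvPolynomial.coeff_sum] at hd
  obtain ⟨i, hi, hd⟩ := Finset.exists_ne_zero_of_sum_ne_zero hd
  have := (((MvPolynomial.isWeightedHomogeneous_X ℝ wH 2).pow j).C_mul (1 / (j.factorial : ℝ))).mul
    ((Dp_hom i (wordDeriv (List.replicate j 2) g)).C_mul (1 / (i.factorial : ℝ)))
  rw [this hd]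
  simp only [Finset.mem_range] at hi hj
  simp [wH]
  omega

lemma taylor_origin (k : ℕ) (g : H3 → ℝ) (hg : ContDiff ℝ ((k + 1 : ℕ) : WithTop ℕ∞) g) (y : H3)
    (M : ℝ)
    (hb : ∀ w z, wordWeight w = k + 1 → Hnorm z ≤ 4 * Hnorm y → |wordDeriv w g z| ≤ M) :
    |g y - evalP (TP k g) y| ≤ (2 + (k / 2 + 1 : ℕ) * 2 ^ (k + 1)) * Hnorm y ^ (k + 1) * M := by
  have hN := Hnorm_nonneg y
  have hM : 0 ≤ M := (abs_nonneg _).trans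
    (hb (List.replicate (k + 1) 0) y (by simp [wordWeight]) (by linarith))
  have hv := vert k g hg y (Hnorm y) M (Hnorm_c1 y) (Hnorm_c2 y) (Hnorm_c3 y) hb
  have hh : |∑ j ∈ Finset.range (k / 2 + 1), wordDeriv (List.replicate j 2) g (y.1, y.2.1, 0) *
      (y.2.2 ^ j / (j.factorial : ℝ)) - evalP (TP k g) y| ≤
      ((k / 2 + 1 : ℕ) : ℝ) * (2 ^ (k + 1) * Hnorm y ^ (k + 1) * M) := by
    have e : evalP (TP k g) y = ∑ j ∈ Finset.range (k / 2 + 1),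
        evalP (Tp (k + 1 - 2 * j) (wordDeriv (List.replicate j 2) g)) y *
        (y.2.2 ^ j / (j.factorial : ℝ)) := by
      simp only [TP, evalP, map_sum, map_mul, map_pow, MvPolynomial.eval_C, MvPolynomial.eval_X]
      refine Finset.sum_congr rfl fun j _ => ?_
      simp [coords]; ring
    rw [e, ← Finset.sum_sub_distrib]
    refine (Finset.abs_sum_le_sum_abs _ _).trans ?_
    refine (Finset.sum_le_card_nsmul _ _ (2 ^ (k + 1) * Hnorm y ^ (k + 1) * M) ?_).trans
      (by simp)
    intro j hj
    have hj : 2 * j ≤ k := by simp only [Finset.mem_range] at hj; omega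
    rw [← sub_mul, abs_mul]
    have h1 := horiz (k + 1 - 2 * j) (wordDeriv (List.replicate j 2) g)
      (word_contDiff _ _ g (hg.of_le (by simp only [List.length_replicate]; norm_cast; omega)))
      y (Hnorm y) M (Hnorm_c1 y) (Hnorm_c2 y) (fun w z hw hz => by
        rw [← wordDeriv_append]
        exact hb _ _ (by rw [wordWeight_append, wordWeight_replicate]; omega) hz)
    have h2 : |y.2.2 ^ j / (j.factorial : ℝ)| ≤ (2 * Hnorm y) ^ (2 * j) := by
      rw [abs_div, abs_pow, Nat.abs_cast, pow_mul]
      have hf : (1 : ℝ) ≤ j.factorial := by exact_mod_cast Nat.factorial_pos j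
      refine (div_le_self (by positivity) hf).trans ?_
      apply pow_le_pow_left₀ (abs_nonneg _)
      nlinarith [Hnorm_c3 y]
    calc _ ≤ ((2 * Hnorm y) ^ (k + 1 - 2 * j) * M) * (2 * Hnorm y) ^ (2 * j) :=
          mul_le_mul h1 h2 (abs_nonneg _) (by positivity)
      _ = (2 * Hnorm y) ^ (k + 1 - 2 * j + 2 * j) * M := by rw [pow_add]; ring
      _ = _ := by rw [Nat.sub_add_cancel (by omega), mul_pow]
  rw [abs_le] at *
  constructor <;> nlinarith

lemma bdd_set (k : ℕ) (f : H3 → ℝ) (hf : ContDiff ℝ ((k + 1 : ℕ) : WithTop ℕ∞) f) (x₀ : H3) (R : ℝ) :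
    BddAbove {v : ℝ | ∃ (α : List (Fin 3)) (z : H3),
                wordWeight α = k + 1 ∧ Hnorm z ≤ R ∧
                v = |wordDeriv α f (Hmul x₀ z)|} := by
  let K : Set H3 := Set.Icc (-R) R ×ˢ (Set.Icc (-R) R ×ˢ Set.Icc (-R ^ 2) (R ^ 2))
  have hK : IsCompact K := isCompact_Icc.prod (isCompact_Icc.prod isCompact_Icc)
  have hfin : {α : List (Fin 3) | wordWeight α = k + 1}.Finite :=
    (List.finite_length_le (Fin 3) (k + 1)).subset fun α hα => by
      have h1 := length_le_weight α
      simp only [Set.mem_ofPred_eq] at hα ⊢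
      omega
  have : BddAbove (⋃ α ∈ {α : List (Fin 3) | wordWeight α = k + 1},
      (fun z => |wordDeriv α f (Hmul x₀ z)|) '' K) := by
    rw [hfin.bddAbove_biUnion]
    intro α hα
    refine hK.bddAbove_image (Continuous.continuousOn ?_)
    have h1 := length_le_weight α
    have hα' : wordWeight α = k + 1 := hα
    have hc : ContDiff ℝ ((0 : ℕ) : WithTop ℕ∞) (wordDeriv α f) :=
      word_contDiff α 0 f (hf.of_le (by norm_cast; omega))
    have hm : Continuous (Hmul x₀) := by unfold Hmul; fun_prop
    exact (hc.continuous.comp hm).abs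
  refine this.mono ?_
  rintro v ⟨α, z, hα, hz, rfl⟩
  refine Set.mem_biUnion hα ⟨z, ?_, rfl⟩
  have h1 := abs_le.1 ((Hnorm_c1 z).trans hz)
  have h2 := abs_le.1 ((Hnorm_c2 z).trans hz)
  have h3 := abs_le.1 ((Hnorm_c3 z).trans (pow_le_pow_left₀ (Hnorm_nonneg z) hz 2))
  exact ⟨h1, h2, h3⟩

/-- Stratified Taylor inequality: for every `k ∈ ℕ` there exist `C_k, γ₂ > 0`
such that every `C^{k+1}` function `f` admits at every point `x₀` a polynomial `P` of
homogeneous degree at most `k` with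
`|f(x₀∗y) − P(y)| ≤ C_k‖y‖^{k+1} · sup{|∇^α f(x₀∗z)| : |α| = k+1, ‖z‖ ≤ γ₂^{k+1}‖y‖}`. -/
theorem heisenberg_taylor_inequality (k : ℕ) :
    ∃ C : ℝ, 0 < C ∧ ∃ γ₂ : ℝ, 0 < γ₂ ∧
      ∀ f : H3 → ℝ, ContDiff ℝ (k + 1) f → ∀ x₀ : H3,
        ∃ P : MvPolynomial (Fin 3) ℝ, hdeg P ≤ k ∧
          ∀ y : H3, |f (Hmul x₀ y) - evalP P y| ≤
            C * Hnorm y ^ (k + 1) *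
              sSup {v : ℝ | ∃ (α : List (Fin 3)) (z : H3),
                wordWeight α = k + 1 ∧ Hnorm z ≤ γ₂ ^ (k + 1) * Hnorm y ∧
                v = |wordDeriv α f (Hmul x₀ z)|} := by
  refine ⟨2 + (k / 2 + 1 : ℕ) * 2 ^ (k + 1), by positivity, 4, by norm_num, ?_⟩
  intro f hf x₀
  have hf' : ContDiff ℝ ((k + 1 : ℕ) : WithTop ℕ∞) f := by exact_mod_cast hf
  have hm : ContDiff ℝ ((k + 1 : ℕ) : WithTop ℕ∞) (Hmul x₀) := by unfold Hmul; fun_prop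
  refine ⟨TP k (fun y => f (Hmul x₀ y)), TP_hdeg _ _, fun y => ?_⟩
  refine taylor_origin k (fun y => f (Hmul x₀ y)) (hf'.comp hm) y _ ?_
  intro w z hw hz
  have hlen := length_le_weight w
  rw [word_comp x₀ w f (hf'.of_le (by norm_cast; omega))]
  refine le_csSup (bdd_set k f hf' x₀ _) ⟨w, z, hw, hz.trans ?_, rfl⟩
  refine mul_le_mul_of_nonneg_right ?_ (Hnorm_nonneg y)
  exact le_self_pow₀ (by norm_num) (by omega)
end
end
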